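/- For all l₁, l₂ with 0 ≤ l₁ ≤ l₂ ≤ a, the volume of {(A,B) ∈ C × C : l₁ ≤ dist(A,B) ≤ l₂} equals a⁶ · ∫_{l₁}^{l₂} P₁(l) dl. That is, on the interval [0,a] the separation of two uniformly random points of C has probability density P₁. -/

import Mathlib

open MeasureTheory Real Set

/-- The cube `[0,a]³` in Euclidean 3-space. -/
def cube (a : ℝ) : Set (EuclideanSpace ℝ (Fin 3)) := {x | ∀ i, x i ∈ Set.Icc 0 a}

/-- The density of separations on the range `0 ≤ l ≤ a`. -/
noncomputable def P₁ (a l : ℝ) : ℝ :=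
  l ^ 2 * (4 * π * a ^ 3 - 6 * π * a ^ 2 * l + 8 * a * l ^ 2 - l ^ 3) / a ^ 6


lemma int1 (a r : ℝ) : ∫ u in (0:ℝ)..r, 2 * (a-u) * 1 = 2*a*r - r^2 := by
  have h : ∀ u ∈ uIcc 0 r, HasDerivAt (fun u:ℝ => 2*a*u - u^2) (2*(a-u)*1) u := by
    intro u _
    have := ((hasDerivAt_id' u).const_mul (2*a)).sub ((hasDerivAt_id' u).pow 2)
    refine this.congr_deriv ?_; norm_num; ring
  rw [intervalIntegral.integral_eq_sub_of_hasDerivAt h (by apply Continuous.intervalIntegrable; fun_prop)]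
  ring

lemma hsq (r u : ℝ) (h : u^2 < r^2) : HasDerivAt (fun u:ℝ => √(r^2-u^2)) (-u/√(r^2-u^2)) u := by
  have := (((hasDerivAt_id' u).pow 2).const_sub (r^2)).sqrt (by simp; linarith)
  refine this.congr_deriv ?_; simp only [Pi.pow_apply]; field_simp; norm_num

lemma harc (r u : ℝ) (hr : 0 < r) (h : u^2 < r^2) :
    HasDerivAt (fun u:ℝ => arcsin (u/r)) (1/√(r^2-u^2)) u := by
  have h1 := abs_lt.1 (sq_lt_sq.1 h)
  rw [abs_of_pos hr] at h1
  have hd := (hasDerivAt_arcsin (x := u/r) (by rw [Ne, div_eq_iff hr.ne']; intro h; linarith [h1.1]) (by rw [Ne, div_eq_iff hr.ne']; intro h; linarith [h1.2]))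
  have := hd.comp u ((hasDerivAt_id' u).div_const r)
  refine this.congr_deriv ?_
  have : r^2-u^2 = r^2 * (1 - (u/r)^2) := by field_simp
  rw [this, sqrt_mul (by positivity), sqrt_sq hr.le]
  field_simp

lemma int2 (a r : ℝ) (hr : 0 ≤ r) : ∫ u in (0:ℝ)..r, 2 * (a-u) * (2*a*√(r^2-u^2) - √(r^2-u^2)^2)
    = π*a^2*r^2 - 8/3*a*r^3+r^4/2 := by
  rcases hr.eq_or_lt with rfl | hr
  · simp
  rw [intervalIntegral.integral_eq_sub_of_hasDerivAt_of_le
    (f := fun u => 2*a^2*(u*√(r^2-u^2) + r^2*arcsin (u/r)) + 4*a/3*√(r^2-u^2)^3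
       - 2*a*(r^2*u-u^3/3) + (r^2*u^2 - u^4/2)) hr.le]
  · simp [hr.ne', sqrt_sq hr.le]
    ring
  · have := continuous_arcsin
    fun_prop
  · intro u hu
    have hlt : u^2 < r^2 := by nlinarith [hu.1, hu.2]
    have h1 := hsq r u hlt
    have h2 := harc r u hr hlt
    have hi := hasDerivAt_id' u
    have := (((((hi.mul h1).add (h2.const_mul (r^2))).const_mul (2*a^2)).add ((h1.pow 3).const_mul (4*a/3))).sub (((hi.const_mul (r^2)).sub ((hi.pow 3).div_const 3)).const_mul (2*a))).add (((hi.pow 2).const_mul (r^2)).sub ((hi.pow 4).div_const 2))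
    refine this.congr_deriv ?_
    have hs : 0 < √(r^2-u^2) := sqrt_pos.2 (by linarith)
    have hs2 : √(r^2-u^2)^2 = r^2-u^2 := sq_sqrt (by linarith)
    set s := √(r^2-u^2)
    have hr2 : r^2 = s^2+u^2 := by linarith
    simp only [hr2, Nat.cast_ofNat]
    field_simp
    ring
  · apply Continuous.intervalIntegrable; fun_prop

lemma int3 (a r : ℝ) (hr : 0 ≤ r) : ∫ u in (0:ℝ)..r, 2 * (a-u) * (π*a^2*√(r^2-u^2)^2 - 8/3*a*√(r^2-u^2)^3+√(r^2-u^2)^4/2)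
    = 4/3*π*a^3*r^3 - 3/2*π*a^2*r^4+8/5*a*r^5-r^6/6 := by
  rcases hr.eq_or_lt with rfl | hr
  · simp
  rw [intervalIntegral.integral_eq_sub_of_hasDerivAt_of_le
    (f := fun u => 2*a*(π*a^2*(r^2*u-u^3/3) - 8/3*a*(u*√(r^2-u^2)^3/4 + 3/8*r^2*(u*√(r^2-u^2) + r^2*arcsin (u/r))) + (r^4*u-2/3*r^2*u^3+u^5/5)/2)
      + (π*a^2*√(r^2-u^2)^4/2 - 16/15*a*√(r^2-u^2)^5 + √(r^2-u^2)^6/6)) hr.le]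
  · simp [hr.ne', sqrt_sq hr.le]
    ring
  · have := continuous_arcsin
    fun_prop
  · intro u hu
    have hlt : u^2 < r^2 := by nlinarith [hu.1, hu.2]
    have h1 := hsq r u hlt
    have h2 := harc r u hr hlt
    have hi := hasDerivAt_id' u
    have A := ((hi.const_mul (r^2)).sub ((hi.pow 3).div_const 3)).const_mul (π*a^2)
    have B := ((((hi.mul (h1.pow 3)).div_const 4)).add (((hi.mul h1).add (h2.const_mul (r^2))).const_mul (3/8*r^2))).const_mul (8/3*a)
    have C := ((((hi.const_mul (r^4)).sub ((hi.pow 3).const_mul (2/3*r^2)))).add ((hi.pow 5).div_const 5)).div_const 2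
    have D := ((((h1.pow 4).const_mul (π*a^2)).div_const 2).sub ((h1.pow 5).const_mul (16/15*a))).add ((h1.pow 6).div_const 6)
    have := (((A.sub B).add C).const_mul (2*a)).add D
    refine this.congr_deriv ?_
    have hs : 0 < √(r^2-u^2) := sqrt_pos.2 (by linarith)
    have hs2 : √(r^2-u^2)^2 = r^2-u^2 := sq_sqrt (by linarith)
    set s := √(r^2-u^2)
    have hr2 : r^2 = s^2+u^2 := by linarith
    have hr4 : r^4 = (s^2+u^2)^2 := by rw [← hr2]; ring
    have hq : ((fun u => √(r ^ 2 - u ^ 2)) ^ 3) u = s^3 := rfl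
    rw [hq]
    simp only [hr4, hr2, Nat.cast_ofNat]
    field_simp
    ring
  · apply Continuous.intervalIntegrable; fun_prop

/-- Lebesgue measure on `[0,a]`. -/
noncomputable def mu1 (a : ℝ) : Measure ℝ := volume.restrict (Icc 0 a)

instance (a : ℝ) : SigmaFinite (mu1 a) := by unfold mu1; infer_instance

/-- Sublevel measures. -/
noncomputable def MM (a : ℝ) (n : ℕ) (c : ℝ) : ENNReal :=
  Measure.pi (fun _ : Fin n => (mu1 a).prod (mu1 a)) {x | ∑ i, ((x i).1 - (x i).2)^2 ≤ c}

lemma MM_mono (a : ℝ) (n : ℕ) : Monotone (MM a n) := by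
  intro c d h
  apply measure_mono
  intro x hx
  exact le_trans hx h

lemma MM_neg (a : ℝ) (n : ℕ) (c : ℝ) (h : c < 0) : MM a n c = 0 := by
  unfold MM
  have : {x : Fin n → ℝ × ℝ | ∑ i, ((x i).1 - (x i).2)^2 ≤ c} = ∅ := by
    apply eq_empty_of_forall_notMem
    intro x hx
    exact absurd hx (not_le.2 (h.trans_le (Finset.sum_nonneg fun i _ => sq_nonneg _)))
  rw [this, measure_empty]

lemma MM_zero (a : ℝ) (c : ℝ) (h : 0 ≤ c) : MM a 0 c = 1 := by
  simp [MM, h]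

lemma MM_succ (a : ℝ) (n : ℕ) (c : ℝ) :
    MM a (n+1) c = ∫⁻ p, MM a n (c - (p.1-p.2)^2) ∂((mu1 a).prod (mu1 a)) := by
  have hp := (measurePreserving_piFinSuccAbove (fun _ : Fin (n+1) => (mu1 a).prod (mu1 a)) 0).symm
  have hm : MeasurableSet {x : Fin (n+1) → ℝ × ℝ | ∑ i, ((x i).1 - (x i).2)^2 ≤ c} :=
    measurableSet_le (by fun_prop) (by fun_prop)
  rw [MM, ← hp.measure_preimage hm.nullMeasurableSet, Measure.prod_apply (by measurability)]
  apply lintegral_congr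
  intro p
  unfold MM
  congr 1
  ext x
  simp [Fin.sum_univ_succ, MeasurableEquiv.piFinSuccAbove_symm_apply, le_sub_iff_add_le']

lemma lint_even (f : ℝ → ENNReal) (hf : ∀ x, f (-x) = f x) :
    ∫⁻ x, f x = ∫⁻ x in Ioi 0, 2 * f x := by
  rw [← lintegral_add_compl f (measurableSet_Ioi (a := (0:ℝ))), compl_Ioi,
    setLIntegral_congr (Iio_ae_eq_Iic (a := (0:ℝ)) (μ := volume)).symm]
  have : ∫⁻ x in Iio (0:ℝ), f x = ∫⁻ x in Ioi 0, f x := by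
    rw [← lintegral_indicator measurableSet_Iio, ← lintegral_indicator measurableSet_Ioi,
      ← lintegral_neg_eq_self]
    congr 1
    ext x
    simp [indicator, hf]
  rw [this, ← two_mul, lintegral_const_mul' _ _ (by simp)]

lemma lint_pair (a : ℝ) (g : ℝ → ENNReal) (hg : Measurable g) :
    ∫⁻ p, g ((p.1-p.2)^2) ∂((mu1 a).prod (mu1 a)) =
      ∫⁻ u in Ioi 0, 2 * (ENNReal.ofReal (a-u) * g (u^2)) := by
  rw [lintegral_prod _ (by fun_prop)]
  unfold mu1
  have h1 : ∀ x, ∫⁻ y in Icc 0 a, g ((x-y)^2) = ∫⁻ v, (Icc 0 a).indicator (fun _ => g (v^2)) (v+x) := by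
    intro x
    rw [← lintegral_indicator measurableSet_Icc, ← lintegral_add_right_eq_self _ x]
    congr 1
    ext v
    simp only [indicator]
    congr 2
    ring
  simp only [h1]
  have hmeas : Measurable (Function.uncurry fun x v : ℝ => (Icc 0 a).indicator (fun _ => g (v^2)) (v+x)) := by
    have : (Function.uncurry fun x v : ℝ => (Icc 0 a).indicator (fun _ => g (v^2)) (v+x)) =
      ((fun p : ℝ × ℝ => p.2 + p.1) ⁻¹' Icc 0 a).indicator (fun p => g (p.2^2)) := by
      ext p; simp [Function.uncurry, indicator]
    rw [this]
    apply Measurable.indicator (by fun_prop)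
    exact measurableSet_Icc.preimage (by fun_prop)
  rw [lintegral_lintegral_swap hmeas.aemeasurable]
  have h2 : ∀ v, ∫⁻ x in Icc 0 a, (Icc 0 a).indicator (fun _ => g (v^2)) (v+x) =
      ENNReal.ofReal (a-|v|) * g (v^2) := by
    intro v
    have : ∀ x, (Icc 0 a).indicator (fun _ => g (v^2)) (v+x) = (Icc (-v) (a-v)).indicator (fun _ => g (v^2)) x := by
      intro x
      have : v + x ∈ Icc 0 a ↔ x ∈ Icc (-v) (a-v) := by
        simp only [mem_Icc]; constructor <;> rintro ⟨h, h'⟩ <;> constructor <;> linarith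
      simp only [indicator, this]
    simp only [this]
    rw [lintegral_indicator measurableSet_Icc, setLIntegral_const, Measure.restrict_apply measurableSet_Icc,
      Icc_inter_Icc, Real.volume_Icc, mul_comm]
    congr 2
    rcases le_total 0 v with h | h
    · rw [abs_of_nonneg h, max_eq_right (by linarith), min_eq_left (by linarith)]; try ring
    · rw [abs_of_nonpos h, max_eq_left (by linarith), min_eq_right (by linarith)]; try ring
  simp only [h2]
  rw [lint_even _ (by simp)]
  apply setLIntegral_congr_fun measurableSet_Ioi
  intro x hx
  simp only [abs_of_pos (mem_Ioi.1 hx)]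

lemma MM_step (a : ℝ) (n : ℕ) (I : ℝ → ℝ) (hI : Continuous I) (hI0 : ∀ r, 0 ≤ r → r ≤ a → 0 ≤ I r)
    (h : ∀ r, 0 ≤ r → r ≤ a → MM a n (r^2) = ENNReal.ofReal (I r)) (r : ℝ) (hr : 0 ≤ r) (hra : r ≤ a) :
    MM a (n+1) (r^2) = ENNReal.ofReal (∫ u in (0:ℝ)..r, 2 * (a-u) * I √(r^2-u^2)) := by
  rw [MM_succ, lint_pair a (fun t => MM a n (r^2 - t)) ((MM_mono a n).measurable.comp (by fun_prop)),
    intervalIntegral.integral_of_le hr, ofReal_integral_eq_lintegral_ofReal]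
  · rw [← lintegral_indicator measurableSet_Ioi, ← lintegral_indicator measurableSet_Ioc]
    congr 1
    ext u
    by_cases h0 : 0 < u
    · by_cases hu : u ≤ r
      · have hle : u^2 ≤ r^2 := by nlinarith
        have hs : √(r^2-u^2) ≤ a := by
          rw [sqrt_le_left (by linarith)]; nlinarith
        have := h _ (sqrt_nonneg (r^2-u^2)) hs
        rw [sq_sqrt (by linarith)] at this
        simp only [indicator, mem_Ioi, h0, mem_Ioc, hu, if_true, and_self, this]
        rw [ENNReal.ofReal_mul (by linarith), ENNReal.ofReal_mul (by norm_num), mul_assoc]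
        simp
      · have : MM a n (r^2-u^2) = 0 := MM_neg _ _ _ (by nlinarith)
        simp [indicator, hu, this]
    · simp [indicator, h0]
  · apply Continuous.integrableOn_Ioc; fun_prop
  · filter_upwards [ae_restrict_mem measurableSet_Ioc] with u hu
    have hs : √(r^2-u^2) ≤ a := by
      rw [sqrt_le_left (by linarith [hu.1, hu.2])]; nlinarith
    have := hI0 _ (sqrt_nonneg (r^2-u^2)) hs
    have : 0 ≤ a - u := by linarith [hu.2]
    simp only [Pi.zero_apply]
    positivity

/-- The cumulative volume. -/
noncomputable def GG (a r : ℝ) : ℝ := 4/3*π*a^3*r^3 - 3/2*π*a^2*r^4+8/5*a*r^5-r^6/6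

lemma I2_nonneg (a r : ℝ) (hr : 0 ≤ r) (hra : r ≤ a) : 0 ≤ π*a^2*r^2 - 8/3*a*r^3+r^4/2 := by
  have h : 0 ≤ π*a^2 - 8/3*a*r+r^2/2 := by
    nlinarith [pi_gt_three, sq_nonneg a, mul_nonneg (sub_nonneg.2 pi_gt_three.le) (sq_nonneg a), sq_nonneg (a-r), mul_nonneg hr (sub_nonneg.2 hra)]
  have := mul_nonneg h (sq_nonneg r)
  nlinarith

lemma MM3 (a r : ℝ) (hr : 0 ≤ r) (hra : r ≤ a) : MM a 3 (r^2) = ENNReal.ofReal (GG a r) := by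
  have h1 : ∀ r, 0 ≤ r → r ≤ a → MM a 1 (r^2) = ENNReal.ofReal (2*a*r-r^2) := by
    intro r hr hra
    rw [MM_step a 0 (fun _ => 1) (by fun_prop) (by simp)
      (fun r _ _ => by rw [MM_zero a _ (sq_nonneg r)]; simp) r hr hra, int1]
  have h2 : ∀ r, 0 ≤ r → r ≤ a → MM a 2 (r^2) = ENNReal.ofReal (π*a^2*r^2 - 8/3*a*r^3+r^4/2) := by
    intro r hr hra
    rw [MM_step a 1 (fun r => 2*a*r-r^2) (by fun_prop) (fun r hr hra => by nlinarith) h1 r hr hra,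
      int2 _ _ hr]
  rw [MM_step a 2 (fun r => π*a^2*r^2 - 8/3*a*r^3+r^4/2) (by fun_prop)
    (I2_nonneg a) h2 r hr hra, int3 _ _ hr, GG]

lemma GG_nonneg (a r : ℝ) (hr : 0 ≤ r) (hra : r ≤ a) : 0 ≤ GG a r := by
  rw [GG, ← int3 a r hr]
  apply intervalIntegral.integral_nonneg hr
  intro u hu
  have hs : √(r^2-u^2) ≤ a := by
    rw [sqrt_le_left (by linarith [hu.1, hu.2])]; nlinarith
  have := I2_nonneg a _ (sqrt_nonneg (r^2-u^2)) hs
  have : 0 ≤ a - u := by linarith [hu.2]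
  positivity

/-- Pairs in the cube at distance at most `l`. -/
def SS (a l : ℝ) : Set (EuclideanSpace ℝ (Fin 3) × EuclideanSpace ℝ (Fin 3)) :=
  {p | p.1 ∈ cube a ∧ p.2 ∈ cube a ∧ dist p.1 p.2 ≤ l}

lemma cube_meas (a : ℝ) : MeasurableSet (cube a) := by
  have : cube a = ⋂ i, (fun x : EuclideanSpace ℝ (Fin 3) => x i) ⁻¹' Icc 0 a := by
    ext x; simp [cube]
  rw [this]
  exact MeasurableSet.iInter fun i => measurableSet_Icc.preimage (by fun_prop)

lemma SS_meas (a l : ℝ) : MeasurableSet (SS a l) := by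
  have : SS a l = (Prod.fst ⁻¹' cube a) ∩ ((Prod.snd ⁻¹' cube a) ∩ {p | dist p.1 p.2 ≤ l}) := rfl
  rw [this]
  exact ((cube_meas a).preimage measurable_fst).inter (((cube_meas a).preimage measurable_snd).inter
    (measurableSet_le (by fun_prop) (by fun_prop)))

lemma vol_SS (a r : ℝ) (hr : 0 ≤ r) : volume (SS a r) = MM a 3 (r^2) := by
  have e := (EuclideanSpace.volume_preserving_symm_measurableEquiv_toLp (Fin 3)).symm
  have e2 := e.prod e
  have hv : (volume : Measure (EuclideanSpace ℝ (Fin 3) × EuclideanSpace ℝ (Fin 3))) = volume.prod volume := rfl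
  rw [hv, ← e2.measure_preimage (SS_meas a r).nullMeasurableSet]
  have hp := measurePreserving_arrowProdEquivProdArrow ℝ ℝ (Fin 3) (fun _ => mu1 a) (fun _ => mu1 a)
  have hm : MeasurableSet {q : (Fin 3 → ℝ) × (Fin 3 → ℝ) | ∑ i, (q.1 i - q.2 i)^2 ≤ r^2} :=
    measurableSet_le (by fun_prop) (by fun_prop)
  have h1 := hp.measure_preimage hm.nullMeasurableSet
  have h2 : MM a 3 (r^2) = _ := h1
  rw [h2]
  unfold mu1
  rw [← Measure.restrict_pi_pi, Measure.prod_restrict, Measure.restrict_apply hm]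
  congr 1
  ext q
  simp only [SS, mem_preimage, mem_inter_iff, cube, mem_prod, mem_univ_pi, EuclideanSpace.dist_eq, Prod.map]
  change _ ∧ _ ∧ √(∑ i, dist (q.1 i) (q.2 i) ^ 2) ≤ r ↔ (∑ i, (q.1 i - q.2 i)^2 ≤ r^2) ∧ _
  rw [sqrt_le_left hr]
  simp only [Real.dist_eq, sq_abs]
  constructor
  · rintro ⟨h, h', h''⟩; exact ⟨h'', h, h'⟩
  · rintro ⟨h'', h, h'⟩; exact ⟨h, h', h''⟩

lemma int_P (a : ℝ) (ha : 0 < a) (l₁ l₂ : ℝ) : a ^ 6 * ∫ l in l₁..l₂, P₁ a l = GG a l₂ - GG a l₁ := by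
  rw [← intervalIntegral.integral_const_mul]
  apply intervalIntegral.integral_eq_sub_of_hasDerivAt
  · intro r _
    have hi := hasDerivAt_id' r
    have := ((((hi.pow 3).const_mul (4/3*π*a^3)).sub ((hi.pow 4).const_mul (3/2*π*a^2))).add
      ((hi.pow 5).const_mul (8/5*a))).sub ((hi.pow 6).div_const 6)
    refine HasDerivAt.congr_deriv (f := GG a) this ?_
    simp only [P₁, Nat.cast_ofNat]
    field_simp
    ring
  · apply Continuous.intervalIntegrable; unfold P₁; fun_prop

theorem density_on_first_range (a : ℝ) (ha : 0 < a) (l₁ l₂ : ℝ)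
    (h0 : 0 ≤ l₁) (h12 : l₁ ≤ l₂) (h2a : l₂ ≤ a) :
    volume {p : EuclideanSpace ℝ (Fin 3) × EuclideanSpace ℝ (Fin 3) |
        p.1 ∈ cube a ∧ p.2 ∈ cube a ∧ l₁ ≤ dist p.1 p.2 ∧ dist p.1 p.2 ≤ l₂} =
      ENNReal.ofReal (a ^ 6 * ∫ l in l₁..l₂, P₁ a l) := by
  rw [int_P a ha, ENNReal.ofReal_sub _ (GG_nonneg a l₁ h0 (h12.trans h2a)),
    ← MM3 a l₁ h0 (h12.trans h2a), ← MM3 a l₂ (h0.trans h12) h2a, ← vol_SS a _ h0,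
    ← vol_SS a _ (h0.trans h12)]
  have hfin : volume (SS a l₁) ≠ ⊤ := by
    rw [vol_SS a _ h0, MM3 a l₁ h0 (h12.trans h2a)]; exact ENNReal.ofReal_ne_top
  have hsub : SS a l₁ ⊆ SS a l₂ := fun p hp => ⟨hp.1, hp.2.1, hp.2.2.trans h12⟩
  rw [← measure_sdiff hsub (SS_meas a l₁).nullMeasurableSet hfin]
  have hmeq : MeasurableSet {p : EuclideanSpace ℝ (Fin 3) × EuclideanSpace ℝ (Fin 3) | dist p.1 p.2 = l₁} :=
    measurableSet_eq_fun (by fun_prop) (by fun_prop)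
  have hnull : volume {p : EuclideanSpace ℝ (Fin 3) × EuclideanSpace ℝ (Fin 3) | dist p.1 p.2 = l₁} = 0 := by
    apply (Measure.measure_prod_null hmeq).2
    refine Filter.Eventually.of_forall fun x => ?_
    have : Prod.mk x ⁻¹' {p : EuclideanSpace ℝ (Fin 3) × EuclideanSpace ℝ (Fin 3) | dist p.1 p.2 = l₁} = Metric.sphere x l₁ := by
      ext y
      rw [Metric.mem_sphere, dist_comm y x]; exact Iff.rfl
    simp only [this, Pi.zero_apply]
    exact Measure.addHaar_sphere _ _ _
  apply le_antisymm
  · calc _ ≤ volume (SS a l₂ \ SS a l₁ ∪ {p | dist p.1 p.2 = l₁}) := by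
          apply measure_mono
          rintro p ⟨h1, h2, h3, h4⟩
          rcases h3.eq_or_lt with h | h
          · exact Or.inr h.symm
          · exact Or.inl ⟨⟨h1, h2, h4⟩, fun h' => absurd h'.2.2 (not_le.2 h)⟩
      _ ≤ _ := measure_union_le _ _
      _ = _ := by rw [hnull, add_zero]
  · apply measure_mono
    rintro p ⟨⟨h1, h2, h4⟩, h⟩
    exact ⟨h1, h2, le_of_not_ge fun h' => h ⟨h1, h2, h'⟩, h4⟩
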